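/- Let 𝓔(θ) = α₁𝓔₁(θ) + α₂𝓔₂(θ) where, via Plancherel, 𝓔ᵢ(θ) = (1/2π)∫_{-∞}^{∞} mᵢ(τ)|f̂(ω+iτ)|²dτ with m₁(τ) = |ĥ(ω+iτ)|², m₂(τ) = |(ω+iτ)ĥ(ω+iτ)|², and f = θ−γ. If α₁ m₁(τ) + α₂ m₂(τ) ≥ c > 0 for all τ, then 𝓔(θ) ≥ c ‖θ−γ‖²_{L²(ρ)} even though inf_τ m₁(τ) = 0 and inf_τ m₂(τ) may be small: the combined weight can have a strictly positive infimum when neither single weight does. -/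

import Mathlib

open MeasureTheory Complex Real

/-- Laplace transform of a real function on `[0,∞)`. -/
noncomputable def laplace (f : ℝ → ℝ) (z : ℂ) : ℂ :=
  ∫ t in Set.Ioi (0 : ℝ), (f t : ℂ) * Complex.exp (-z * t)

/-- Causal convolution on `[0,∞)`. -/
noncomputable def conv (f h : ℝ → ℝ) (t : ℝ) : ℝ :=
  ∫ s in (0 : ℝ)..t, f (t - s) * h s

/-!
Multiplying by `e^{-ωt}` and extending by zero to `(-∞, 0]` turns the Laplace transform along the
line `Re z = ω` into the Fourier transform, so Plancherel's theorem gives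
`∫ |û(ω + iτ)|² dτ = 2π ∫₀^∞ u(t)² e^{-2ωt} dt`. On this line the causal convolution of `f` and `h`
has transform `ĥ(z) f̂(z)`, and its derivative has transform `z ĥ(z) f̂(z)`, without boundary term
because the convolution vanishes at `0`. Multiplying the lower bound on the spectral weight by
`|f̂(z)|²` and integrating over the line gives the estimate.
-/

open scoped FourierTransform SchwartzMap Convolution ENNReal

section Plancherel

variable {V F : Type*} [NormedAddCommGroup V] [InnerProductSpace ℝ V] [FiniteDimensional ℝ V]
  [MeasurableSpace V] [BorelSpace V]

theorem integral_fourier_smul_eq_integral_smul_fourier [NormedAddCommGroup F] [NormedSpace ℂ F]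
    [CompleteSpace F] {φ : V → ℂ} {f : V → F} (hφ : Integrable φ) (hf : Integrable f) :
    ∫ ξ, 𝓕 φ ξ • f ξ = ∫ x, φ x • 𝓕 f x := by
  simpa using! VectorFourier.integral_fourierIntegral_smul_eq_flip (L := innerₗ V)
    Real.continuous_fourierChar continuous_inner hφ hf

variable [NormedAddCommGroup F] [InnerProductSpace ℂ F] [CompleteSpace F]

theorem fourier_toLp_ae_eq {f : V → F} (hf : Integrable f) (hf₂ : MemLp f 2) :
    (𝓕 (hf₂.toLp f) : Lp F 2 (volume : Measure V)) =ᵐ[volume] 𝓕 f := by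
  have hcont : Continuous (𝓕 f) := VectorFourier.fourierIntegral_continuous (L := innerₗ V)
    Real.continuous_fourierChar continuous_inner hf
  refine ae_eq_of_integral_contDiff_smul_eq ((Lp.memLp _).locallyIntegrable (by norm_num))
    hcont.locallyIntegrable fun g hg hg_supp ↦ ?_
  let φ : 𝓢(V, ℂ) := HasCompactSupport.toSchwartzMap (f := Complex.ofRealCLM ∘ g)
    (hg_supp.comp_left rfl) (by fun_prop)
  calc ∫ x, g x • (𝓕 (hf₂.toLp f) : Lp F 2 (volume : Measure V)) x
      = ∫ x, φ x • (𝓕 (hf₂.toLp f) : Lp F 2 (volume : Measure V)) x := by simp [φ]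
    _ = ∫ ξ, 𝓕 φ ξ • (hf₂.toLp f) ξ := by
      have h := DFunLike.congr_fun (Lp.fourier_toTemperedDistribution_eq (hf₂.toLp f)) φ
      simpa only [TemperedDistribution.fourier_apply, Lp.toTemperedDistribution_apply]
        using h.symm
    _ = ∫ ξ, 𝓕 φ ξ • f ξ := by
      refine integral_congr_ae ?_
      filter_upwards [hf₂.coeFn_toLp] with ξ hξ
      rw [hξ]
    _ = ∫ x, φ x • 𝓕 f x := by
      rw [SchwartzMap.fourier_coe]
      exact integral_fourier_smul_eq_integral_smul_fourier φ.integrable hf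
    _ = ∫ x, g x • 𝓕 f x := by simp [φ]

theorem memLp_two_fourier {f : V → F} (hf : Integrable f) (hf₂ : MemLp f 2) : MemLp (𝓕 f) 2 :=
  (memLp_congr_ae (fourier_toLp_ae_eq hf hf₂)).1 (Lp.memLp _)

theorem eLpNorm_two_fourier {f : V → F} (hf : Integrable f) (hf₂ : MemLp f 2) :
    eLpNorm (𝓕 f) 2 = eLpNorm f 2 := by
  rw [← eLpNorm_congr_ae (fourier_toLp_ae_eq hf hf₂), ← eLpNorm_congr_ae hf₂.coeFn_toLp,
    ← Lp.enorm_def, ← Lp.enorm_def, ← ofReal_norm, ← ofReal_norm, Lp.norm_fourier_eq]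

end Plancherel

theorem integral_norm_sq_eq_toReal_eLpNorm_sq {α E : Type*} [MeasurableSpace α] {μ : Measure α}
    [NormedAddCommGroup E] {f : α → E} (hf : MemLp f 2 μ) :
    ∫ x, ‖f x‖ ^ 2 ∂μ = (eLpNorm f 2 μ).toReal ^ 2 := by
  rw [hf.eLpNorm_eq_integral_rpow_norm two_ne_zero ENNReal.ofNat_ne_top,
    ENNReal.toReal_ofReal (by positivity), ← Real.rpow_natCast, ← Real.rpow_mul (by positivity)]
  simp

theorem lintegral_mul_sq_le {α : Type*} [MeasurableSpace α] {μ : Measure α} {w g : α → ℝ≥0∞}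
    (hw : AEMeasurable w μ) (hg : AEMeasurable g μ) :
    (∫⁻ x, w x * g x ∂μ) ^ 2 ≤ (∫⁻ x, w x ∂μ) * ∫⁻ x, w x * g x ^ 2 ∂μ := by
  have split (a b : ℝ≥0∞) : a * b = a ^ (1 / 2 : ℝ) * (a * b ^ 2) ^ (1 / 2 : ℝ) := by
    rw [← ENNReal.mul_rpow_of_nonneg _ _ (by norm_num), ← mul_assoc, ← sq, ← mul_pow,
      ← ENNReal.rpow_natCast, ← ENNReal.rpow_mul]
    simp
  have sq_sqrt (a : ℝ≥0∞) : (a ^ (1 / 2 : ℝ)) ^ 2 = a := by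
    rw [← ENNReal.rpow_natCast, ← ENNReal.rpow_mul]; simp
  calc (∫⁻ x, w x * g x ∂μ) ^ 2
      = (∫⁻ x, w x ^ (1 / 2 : ℝ) * (w x * g x ^ 2) ^ (1 / 2 : ℝ) ∂μ) ^ 2 := by
        simp only [← split]
    _ ≤ ((∫⁻ x, w x ∂μ) ^ (1 / 2 : ℝ) * (∫⁻ x, w x * g x ^ 2 ∂μ) ^ (1 / 2 : ℝ)) ^ 2 := by
        gcongr
        exact ENNReal.lintegral_mul_norm_pow_le hw (hw.mul (hg.pow_const 2))
          (by norm_num) (by norm_num) (by norm_num)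
    _ = (∫⁻ x, w x ∂μ) * ∫⁻ x, w x * g x ^ 2 ∂μ := by
        rw [mul_pow, sq_sqrt, sq_sqrt]

section Young

variable {G : Type*} [AddGroup G] [MeasurableSpace G] [MeasurableAdd₂ G] [MeasurableNeg G]
  {μ : Measure G} [SFinite μ] [μ.IsAddRightInvariant]

theorem lintegral_lintegral_mul_sub {f g : G → ℝ≥0∞} (hf : AEMeasurable f μ)
    (hg : AEMeasurable g μ) :
    ∫⁻ x, ∫⁻ t, f t * g (x - t) ∂μ ∂μ = (∫⁻ t, f t ∂μ) * ∫⁻ x, g x ∂μ := by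
  have hfg : AEMeasurable (fun p : G × G ↦ f p.2 * g (p.1 - p.2)) (μ.prod μ) :=
    hf.comp_snd.mul (hg.comp_quasiMeasurePreserving
      (quasiMeasurePreserving_sub_of_right_invariant μ μ))
  have hg_sub (t : G) : AEMeasurable (fun x ↦ g (x - t)) μ :=
    hg.comp_quasiMeasurePreserving (measurePreserving_sub_right μ t).quasiMeasurePreserving
  rw [lintegral_lintegral_swap hfg, ← lintegral_mul_const'' _ hf]
  simp_rw [fun t ↦ lintegral_const_mul'' (f t) (hg_sub t), lintegral_sub_right_eq_self]

variable {E E' F : Type*} [NormedAddCommGroup E] [NormedSpace ℝ E] [NormedAddCommGroup E']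
  [NormedSpace ℝ E'] [NormedAddCommGroup F] [NormedSpace ℝ F] (L : E →L[ℝ] E' →L[ℝ] F)
  {f : G → E} {g : G → E'}

theorem enorm_convolution_sq_le (hf : AEStronglyMeasurable f μ) (hg : AEStronglyMeasurable g μ)
    (x : G) :
    ‖(f ⋆[L, μ] g) x‖ₑ ^ 2 ≤
      ‖L‖ₑ ^ 2 * ((∫⁻ t, ‖f t‖ₑ ∂μ) * ∫⁻ t, ‖f t‖ₑ * ‖g (x - t)‖ₑ ^ 2 ∂μ) := by
  have hg_sub : AEMeasurable (fun t ↦ ‖g (x - t)‖ₑ) μ :=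
    hg.enorm.comp_quasiMeasurePreserving
      (quasiMeasurePreserving_sub_left_of_right_invariant μ x)
  calc ‖(f ⋆[L, μ] g) x‖ₑ ^ 2
      ≤ (∫⁻ t, ‖L‖ₑ * (‖f t‖ₑ * ‖g (x - t)‖ₑ) ∂μ) ^ 2 := by
        gcongr
        refine (enorm_integral_le_lintegral_enorm _).trans (lintegral_mono fun t ↦ ?_)
        rw [← mul_assoc]
        exact ((L (f t)).le_opENorm _).trans (by gcongr; exact L.le_opENorm _)
    _ = ‖L‖ₑ ^ 2 * (∫⁻ t, ‖f t‖ₑ * ‖g (x - t)‖ₑ ∂μ) ^ 2 := by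
        rw [lintegral_const_mul' _ _ enorm_ne_top, mul_pow]
    _ ≤ _ := by
        gcongr
        exact lintegral_mul_sq_le hf.enorm hg_sub

theorem memLp_two_convolution (hf : Integrable f μ) (hg : MemLp g 2 μ) :
    MemLp (f ⋆[L, μ] g) 2 μ := by
  refine ⟨(hf.1.convolution_integrand L hg.1).integral_prod_right', ?_⟩
  rw [eLpNorm_lt_top_iff_lintegral_rpow_enorm_lt_top two_ne_zero ENNReal.ofNat_ne_top]
  have hg_sq : ∫⁻ x, ‖g x‖ₑ ^ 2 ∂μ < ∞ := by
    simpa using lintegral_rpow_enorm_lt_top_of_eLpNorm_lt_top two_ne_zero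
      ENNReal.ofNat_ne_top hg.2
  simp only [ENNReal.toReal_ofNat, ENNReal.rpow_ofNat]
  calc ∫⁻ x, ‖(f ⋆[L, μ] g) x‖ₑ ^ 2 ∂μ
      ≤ ∫⁻ x, ‖L‖ₑ ^ 2 * ((∫⁻ t, ‖f t‖ₑ ∂μ) * ∫⁻ t, ‖f t‖ₑ * ‖g (x - t)‖ₑ ^ 2 ∂μ) ∂μ :=
        lintegral_mono (enorm_convolution_sq_le L hf.1 hg.1)
    _ = ‖L‖ₑ ^ 2 * ((∫⁻ t, ‖f t‖ₑ ∂μ) * ((∫⁻ t, ‖f t‖ₑ ∂μ) * ∫⁻ x, ‖g x‖ₑ ^ 2 ∂μ)) := by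
        rw [lintegral_const_mul' _ _ (by finiteness), lintegral_const_mul' _ _ hf.2.ne,
          lintegral_lintegral_mul_sub hf.1.enorm (hg.1.enorm.pow_const 2)]
    _ < ∞ := by
        have := hf.2
        rw [HasFiniteIntegral] at this
        finiteness

end Young

section Leibniz

variable {E : Type*} [NormedAddCommGroup E] [NormedSpace ℝ E] {F F' : ℝ → ℝ → E}

theorem hasDerivAt_intervalIntegral_of_continuous (hF : ∀ x, Continuous (F x))
    (hF' : Continuous F'.uncurry) (hderiv : ∀ x s, HasDerivAt (F · s) (F' x s) x) (a b x : ℝ) :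
    HasDerivAt (fun y ↦ ∫ s in a..b, F y s) (∫ s in a..b, F' x s) x := by
  obtain ⟨B, hB⟩ := ((isCompact_closedBall x 1).prod (isCompact_uIcc (a := a)
    (b := b))).exists_bound_of_continuousOn hF'.continuousOn
  refine (intervalIntegral.hasDerivAt_integral_of_dominated_loc_of_deriv_le (bound := fun _ ↦ B)
    (Metric.closedBall_mem_nhds x one_pos) (.of_forall fun y ↦ (hF y).aestronglyMeasurable)
    ((hF x).intervalIntegrable a b) (by fun_prop) (.of_forall fun s hs y hy ↦ ?_) (by simp)
    (.of_forall fun s _ y _ ↦ hderiv y s)).2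
  exact hB (y, s) ⟨hy, Set.uIoc_subset_uIcc hs⟩

theorem hasDerivAt_intervalIntegral_leibniz [CompleteSpace E] (hF : Continuous F.uncurry)
    (hF' : Continuous F'.uncurry) (hderiv : ∀ x s, HasDerivAt (F · s) (F' x s) x) (a x : ℝ) :
    HasDerivAt (fun y ↦ ∫ s in a..y, F y s) (F x x + ∫ s in a..x, F' x s) x := by
  have hFx (y : ℝ) : Continuous (F y) := by fun_prop
  have hF'_integral : Continuous fun v : ℝ × ℝ ↦ ∫ s in a..v.2, F' v.1 s := by fun_prop
  have hspan := (ContinuousLinearMap.toSpanSingletonCLE (𝕜 := ℝ) (E := E)).continuous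
  have htotal := hasStrictFDerivAt_uncurry_coprod (u := (x, x))
    (f := fun y b ↦ ∫ s in a..b, F y s)
    (f₁ := fun y b ↦ .toSpanSingleton ℝ (∫ s in a..b, F' y s))
    (f₂ := fun y b ↦ .toSpanSingleton ℝ (F y b))
    (.of_forall fun v ↦
      (hasDerivAt_intervalIntegral_of_continuous hFx hF' hderiv a v.2 v.1).hasFDerivAt)
    (.of_forall fun v ↦ ((hFx v.1).integral_hasStrictDerivAt a v.2).hasDerivAt.hasFDerivAt)
    (hspan.comp hF'_integral).continuousAt (hspan.comp hF).continuousAt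
  have hdiag : HasDerivAt (fun y : ℝ ↦ (y, y)) (1, 1) x :=
    (hasDerivAt_id x).prodMk (hasDerivAt_id x)
  simpa [Function.HasUncurry.uncurry, Function.comp_def, add_comm] using
    HasFDerivAt.comp_hasDerivAt (f := fun y : ℝ ↦ (y, y)) x htotal.hasFDerivAt hdiag

end Leibniz

section Convolution

variable {f h : ℝ → ℝ}

theorem conv_comm (f h : ℝ → ℝ) : conv f h = conv h f := by
  ext t
  simpa [conv, mul_comm] using
    intervalIntegral.integral_comp_sub_left (a := 0) (b := t) (fun s ↦ f s * h (t - s)) t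

theorem hasDerivAt_conv (hf : Continuous f) (hh : ContDiff ℝ 1 h) (t : ℝ) :
    HasDerivAt (conv f h) (h 0 * f t + conv f (deriv h) t) t := by
  have hderiv (s : ℝ) : HasDerivAt h (deriv h s) s := (hh.differentiable one_ne_zero s).hasDerivAt
  rw [conv_comm f h, conv_comm f (deriv h)]
  have := hasDerivAt_intervalIntegral_leibniz (F := fun x s ↦ h (x - s) * f s)
    (F' := fun x s ↦ deriv h (x - s) * f s) (by fun_prop) (by fun_prop)
    (fun x s ↦ ((hderiv (x - s)).comp_sub_const x s).mul_const (f s)) 0 t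
  simpa only [sub_self]

theorem deriv_conv (hf : Continuous f) (hh : ContDiff ℝ 1 h) :
    deriv (conv f h) = fun t ↦ h 0 * f t + conv f (deriv h) t :=
  funext fun t ↦ (hasDerivAt_conv hf hh t).deriv

end Convolution

/-- The function `t ↦ e^{-ωt} u(t)` on `(0, ∞)`, extended by zero to the real line. Its Fourier
transform is the Laplace transform of `u` along the line `Re z = ω`. -/
noncomputable def dampedExtension (ω : ℝ) (u : ℝ → ℝ) : ℝ → ℂ :=
  (Set.Ioi 0).indicator fun t ↦ ((u t * Real.exp (-ω * t) : ℝ) : ℂ)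

namespace dampedExtension

variable {ω : ℝ} {u f h : ℝ → ℝ}

theorem integrable_iff :
    Integrable (dampedExtension ω u) ↔
      IntegrableOn (fun t ↦ u t * Real.exp (-ω * t)) (Set.Ioi 0) := by
  rw [dampedExtension, integrable_indicator_iff measurableSet_Ioi]
  exact ⟨fun hu ↦ hu.re, fun hu ↦ hu.ofReal⟩

theorem norm_sq_eq_indicator (ω : ℝ) (u : ℝ → ℝ) :
    (fun t ↦ ‖dampedExtension ω u t‖ ^ 2) =
      (Set.Ioi 0).indicator fun t ↦ u t ^ 2 * Real.exp (-2 * ω * t) := by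
  ext t
  by_cases ht : t ∈ Set.Ioi (0 : ℝ)
  · rw [dampedExtension, Set.indicator_of_mem ht, Set.indicator_of_mem ht, Complex.norm_real,
      Real.norm_eq_abs, sq_abs, mul_pow, ← Real.exp_nat_mul]
    ring_nf
  · simp [dampedExtension, Set.indicator_of_notMem ht]

theorem memLp_two_iff (hu : AEStronglyMeasurable (dampedExtension ω u)) :
    MemLp (dampedExtension ω u) 2 ↔
      IntegrableOn (fun t ↦ u t ^ 2 * Real.exp (-2 * ω * t)) (Set.Ioi 0) := by
  rw [memLp_two_iff_integrable_sq_norm hu, norm_sq_eq_indicator,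
    integrable_indicator_iff measurableSet_Ioi]

theorem integral_norm_sq (ω : ℝ) (u : ℝ → ℝ) :
    ∫ t, ‖dampedExtension ω u t‖ ^ 2 =
      ∫ t in Set.Ioi 0, u t ^ 2 * Real.exp (-2 * ω * t) := by
  rw [norm_sq_eq_indicator, integral_indicator measurableSet_Ioi]

theorem const_mul_add (ω a : ℝ) (u v : ℝ → ℝ) :
    dampedExtension ω (fun t ↦ a * u t + v t) =
      (a : ℂ) • dampedExtension ω u + dampedExtension ω v := by
  ext t
  by_cases ht : 0 < t
  · simp [dampedExtension, ht]
    ring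
  · simp [dampedExtension, ht]

theorem conv_eq_convolution (ω : ℝ) (f h : ℝ → ℝ) :
    dampedExtension ω (conv f h) =
      dampedExtension ω h ⋆[ContinuousLinearMap.mul ℝ ℂ] dampedExtension ω f := by
  unfold dampedExtension
  rw [← posConvolution_eq_convolution_indicator _ _ (ContinuousLinearMap.mul ℝ ℂ) volume,
    posConvolution]
  congr! 2 with t
  rw [conv, ← intervalIntegral.integral_mul_const, ← intervalIntegral.integral_ofReal]
  congr! 2 with s
  have exp_split : Real.exp (-ω * t) = Real.exp (-ω * s) * Real.exp (-ω * (t - s)) := by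
    rw [← Real.exp_add]
    ring_nf
  rw [ContinuousLinearMap.mul_apply', exp_split]
  push_cast
  ring

theorem integrable_conv (hf : Integrable (dampedExtension ω f))
    (hh : Integrable (dampedExtension ω h)) : Integrable (dampedExtension ω (conv f h)) := by
  rw [conv_eq_convolution]
  exact hh.integrable_convolution _ hf

theorem memLp_two_conv (hf : MemLp (dampedExtension ω f) 2)
    (hh : Integrable (dampedExtension ω h)) : MemLp (dampedExtension ω (conv f h)) 2 := by
  rw [conv_eq_convolution]
  exact memLp_two_convolution _ hh hf

theorem integrable_deriv_conv (hf_cont : Continuous f) (hh_diff : ContDiff ℝ 1 h)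
    (hf : Integrable (dampedExtension ω f)) (hh' : Integrable (dampedExtension ω (deriv h))) :
    Integrable (dampedExtension ω (deriv (conv f h))) := by
  rw [deriv_conv hf_cont hh_diff, const_mul_add]
  exact (hf.smul _).add (integrable_conv hf hh')

theorem memLp_two_deriv_conv (hf_cont : Continuous f) (hh_diff : ContDiff ℝ 1 h)
    (hf : MemLp (dampedExtension ω f) 2) (hh' : Integrable (dampedExtension ω (deriv h))) :
    MemLp (dampedExtension ω (deriv (conv f h))) 2 := by
  rw [deriv_conv hf_cont hh_diff, const_mul_add]
  exact (hf.const_smul _).add (memLp_two_conv hf hh')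

end dampedExtension

section Laplace

variable {ω : ℝ} {u u' f h : ℝ → ℝ} {z : ℂ}

theorem fourierChar_smul_dampedExtension (u : ℝ → ℝ) (z : ℂ) :
    (fun t ↦ Real.fourierChar (-inner ℝ t (z.im / (2 * π))) • dampedExtension z.re u t) =
      (Set.Ioi 0).indicator fun t : ℝ ↦ (u t : ℂ) * Complex.exp (-z * t) := by
  ext t
  by_cases ht : 0 < t
  · have exp_split : Complex.exp (-z * t) =
        Complex.exp (-(z.im * t) * I) * Complex.exp (-z.re * t) := by
      rw [← Complex.exp_add]
      conv_lhs => rw [← re_add_im z]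
      ring_nf
    have phase : 2 * π * (z.im / (2 * π) * t) = z.im * t := by field_simp
    rw [Set.indicator_of_mem (Set.mem_Ioi.2 ht), exp_split]
    simp [dampedExtension, ht, Circle.smul_def, Real.fourierChar_apply, phase]
    ring
  · simp [dampedExtension, ht]

theorem laplace_eq_fourier_dampedExtension (u : ℝ → ℝ) (z : ℂ) :
    laplace u z = 𝓕 (dampedExtension z.re u) (z.im / (2 * π)) := by
  rw [Real.fourier_eq, fourierChar_smul_dampedExtension, laplace,
    integral_indicator measurableSet_Ioi]

theorem integrableOn_mul_cexp_iff :
    IntegrableOn (fun t : ℝ ↦ (u t : ℂ) * Complex.exp (-z * t)) (Set.Ioi 0) ↔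
      Integrable (dampedExtension z.re u) := by
  rw [← integrable_indicator_iff measurableSet_Ioi, ← fourierChar_smul_dampedExtension,
    Real.fourierIntegral_convergent_iff]

theorem laplace_conv (hf : Integrable (dampedExtension z.re f))
    (hh : Integrable (dampedExtension z.re h)) :
    laplace (conv f h) z = laplace h z * laplace f z := by
  simp only [laplace_eq_fourier_dampedExtension, dampedExtension.conv_eq_convolution]
  exact Real.fourier_mul_convolution_eq hh hf _

theorem laplace_deriv (hderiv : ∀ t ∈ Set.Ici 0, HasDerivAt u (u' t) t)
    (hu : Integrable (dampedExtension z.re u)) (hu' : Integrable (dampedExtension z.re u')) :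
    laplace u' z = z * laplace u z - u 0 := by
  rw [← integrableOn_mul_cexp_iff] at hu hu'
  have hderiv_cexp (t : ℝ) (ht : t ∈ Set.Ici 0) :
      HasDerivAt (fun t : ℝ ↦ (u t : ℂ) * Complex.exp (-z * t))
        (u' t * Complex.exp (-z * t) - z * (u t * Complex.exp (-z * t))) t := by
    have hexp := ((hasDerivAt_id (t : ℂ)).const_mul (-z)).cexp.comp_ofReal
    refine ((hderiv t ht).ofReal_comp.mul hexp).congr_deriv ?_
    simp only [id, mul_one]
    ring
  have hint := hu'.sub (hu.const_mul z)
  have hlim := tendsto_zero_of_hasDerivAt_of_integrableOn_Ioi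
    (fun t ht ↦ hderiv_cexp t (Set.Ioi_subset_Ici_self ht)) hint hu
  have := integral_Ioi_of_hasDerivAt_of_tendsto' hderiv_cexp hint hlim
  rw [integral_sub hu' (hu.const_mul z), integral_const_mul] at this
  simp only [ofReal_zero, mul_zero, Complex.exp_zero, mul_one] at this
  rw [laplace, laplace]
  linear_combination this

theorem laplace_deriv_conv (hf_cont : Continuous f) (hh_diff : ContDiff ℝ 1 h)
    (hf : Integrable (dampedExtension z.re f)) (hh : Integrable (dampedExtension z.re h))
    (hh' : Integrable (dampedExtension z.re (deriv h))) :
    laplace (deriv (conv f h)) z = z * laplace h z * laplace f z := by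
  rw [laplace_deriv (fun t _ ↦ (hasDerivAt_conv hf_cont hh_diff t).differentiableAt.hasDerivAt)
    (dampedExtension.integrable_conv hf hh)
    (dampedExtension.integrable_deriv_conv hf_cont hh_diff hf hh'), laplace_conv hf hh]
  simp [conv, mul_assoc]

theorem integrable_norm_laplace_sq (hu : Integrable (dampedExtension ω u))
    (hu₂ : MemLp (dampedExtension ω u) 2) :
    Integrable fun τ : ℝ ↦ ‖laplace u (ω + τ * I)‖ ^ 2 := by
  have := (memLp_two_fourier hu hu₂).integrable_norm_pow two_ne_zero
  simpa [laplace_eq_fourier_dampedExtension] using this.comp_div (R := 2 * π) (by positivity)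

theorem integral_norm_laplace_sq (hu : Integrable (dampedExtension ω u))
    (hu₂ : MemLp (dampedExtension ω u) 2) :
    ∫ τ : ℝ, ‖laplace u (ω + τ * I)‖ ^ 2 =
      2 * π * ∫ t in Set.Ioi 0, u t ^ 2 * Real.exp (-2 * ω * t) := by
  calc ∫ τ : ℝ, ‖laplace u (ω + τ * I)‖ ^ 2
      = ∫ τ : ℝ, ‖𝓕 (dampedExtension ω u) (τ / (2 * π))‖ ^ 2 := by
        simp [laplace_eq_fourier_dampedExtension]
    _ = 2 * π * ∫ ξ, ‖𝓕 (dampedExtension ω u) ξ‖ ^ 2 := by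
        rw [Measure.integral_comp_div (fun ξ ↦ ‖𝓕 (dampedExtension ω u) ξ‖ ^ 2),
          abs_of_pos (by positivity), smul_eq_mul]
    _ = 2 * π * ∫ t, ‖dampedExtension ω u t‖ ^ 2 := by
        rw [integral_norm_sq_eq_toReal_eLpNorm_sq (memLp_two_fourier hu hu₂),
          integral_norm_sq_eq_toReal_eLpNorm_sq hu₂, eLpNorm_two_fourier hu hu₂]
    _ = 2 * π * ∫ t in Set.Ioi 0, u t ^ 2 * Real.exp (-2 * ω * t) := by
        rw [dampedExtension.integral_norm_sq]

end Laplace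

theorem integrableOn_mul_exp_of_abs_le {u : ℝ → ℝ} {C σ ω : ℝ} (hω : 0 < σ + ω)
    (hu : AEStronglyMeasurable u (volume.restrict (Set.Ioi 0)))
    (hdecay : ∀ t, 0 ≤ t → |u t| ≤ C * Real.exp (-σ * t)) :
    IntegrableOn (fun t ↦ u t * Real.exp (-ω * t)) (Set.Ioi 0) := by
  have hexp : IntegrableOn (fun t ↦ C * Real.exp (-(σ + ω) * t)) (Set.Ioi 0) :=
    (integrableOn_exp_mul_Ioi (neg_neg_of_pos hω) 0).const_mul C
  refine hexp.mono' (by fun_prop) ?_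
  filter_upwards [ae_restrict_mem measurableSet_Ioi] with t ht
  calc ‖u t * Real.exp (-ω * t)‖
      = |u t| * Real.exp (-ω * t) := by simp
    _ ≤ C * Real.exp (-σ * t) * Real.exp (-ω * t) := by
        gcongr
        exact hdecay t (le_of_lt ht)
    _ = C * Real.exp (-(σ + ω) * t) := by
        rw [mul_assoc, ← Real.exp_add]
        ring_nf

theorem integrableOn_sq_mul_exp_of_abs_le {u : ℝ → ℝ} {C σ ω : ℝ} (hω : 0 < σ + ω)
    (hu : AEStronglyMeasurable u (volume.restrict (Set.Ioi 0)))
    (hdecay : ∀ t, 0 ≤ t → |u t| ≤ C * Real.exp (-σ * t)) :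
    IntegrableOn (fun t ↦ u t ^ 2 * Real.exp (-2 * ω * t)) (Set.Ioi 0) := by
  have hdecay_sq (t : ℝ) (ht : 0 ≤ t) : |u t ^ 2| ≤ C ^ 2 * Real.exp (-(2 * σ) * t) := by
    calc |u t ^ 2| ≤ (C * Real.exp (-σ * t)) ^ 2 := by
          rw [abs_pow]
          gcongr
          exact hdecay t ht
      _ = C ^ 2 * Real.exp (-(2 * σ) * t) := by
          rw [mul_pow, ← Real.exp_nat_mul]
          ring_nf
  simpa only [neg_mul, Pi.pow_apply] using
    integrableOn_mul_exp_of_abs_le (ω := 2 * ω) (by linarith) (hu.pow 2) hdecay_sq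

theorem mul_norm_sq_le_of_le_norm_sq_add {R : Type*} [NormedRing R] [NormMulClass R]
    {α₁ α₂ c : ℝ} {a b : R} (h : c ≤ α₁ * ‖a‖ ^ 2 + α₂ * ‖b‖ ^ 2) (w : R) :
    c * ‖w‖ ^ 2 ≤ α₁ * ‖a * w‖ ^ 2 + α₂ * ‖b * w‖ ^ 2 := by
  calc c * ‖w‖ ^ 2 ≤ (α₁ * ‖a‖ ^ 2 + α₂ * ‖b‖ ^ 2) * ‖w‖ ^ 2 := by gcongr
    _ = α₁ * ‖a * w‖ ^ 2 + α₂ * ‖b * w‖ ^ 2 := by rw [norm_mul, norm_mul]; ring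

theorem mul_integral_norm_laplace_sq_le {f h : ℝ → ℝ} {α₁ α₂ ω c : ℝ}
    (hf_cont : Continuous f) (hh_diff : ContDiff ℝ 1 h)
    (hf : Integrable (dampedExtension ω f)) (hf₂ : MemLp (dampedExtension ω f) 2)
    (hh : Integrable (dampedExtension ω h)) (hh' : Integrable (dampedExtension ω (deriv h)))
    (hlower : ∀ τ : ℝ, c ≤ α₁ * ‖laplace h (ω + τ * I)‖ ^ 2 +
      α₂ * ‖(ω + τ * I) * laplace h (ω + τ * I)‖ ^ 2) :
    c * ∫ τ : ℝ, ‖laplace f (ω + τ * I)‖ ^ 2 ≤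
      α₁ * (∫ τ : ℝ, ‖laplace (conv f h) (ω + τ * I)‖ ^ 2) +
        α₂ * ∫ τ : ℝ, ‖laplace (deriv (conv f h)) (ω + τ * I)‖ ^ 2 := by
  have hconv (τ : ℝ) : laplace (conv f h) (ω + τ * I) =
      laplace h (ω + τ * I) * laplace f (ω + τ * I) :=
    laplace_conv (by simpa) (by simpa)
  have hderiv (τ : ℝ) : laplace (deriv (conv f h)) (ω + τ * I) =
      (ω + τ * I) * laplace h (ω + τ * I) * laplace f (ω + τ * I) :=
    laplace_deriv_conv hf_cont hh_diff (by simpa) (by simpa) (by simpa)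
  have hconv_int := (integrable_norm_laplace_sq (dampedExtension.integrable_conv hf hh)
    (dampedExtension.memLp_two_conv hf₂ hh)).const_mul α₁
  have hderiv_int := (integrable_norm_laplace_sq
    (dampedExtension.integrable_deriv_conv hf_cont hh_diff hf hh')
    (dampedExtension.memLp_two_deriv_conv hf_cont hh_diff hf₂ hh')).const_mul α₂
  simp only [← integral_const_mul]
  rw [← integral_add hconv_int hderiv_int]
  refine integral_mono ((integrable_norm_laplace_sq hf hf₂).const_mul c)
    (hconv_int.add hderiv_int) fun τ ↦ ?_
  simpa only [hconv, hderiv] using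
    mul_norm_sq_le_of_le_norm_sq_add (hlower τ) (laplace f (ω + τ * I))

theorem combined_loss_coercive_general {f h : ℝ → ℝ} {α₁ α₂ ω c : ℝ}
    (hf_cont : Continuous f) (hh_diff : ContDiff ℝ 1 h)
    (hf : IntegrableOn (fun t ↦ f t * Real.exp (-ω * t)) (Set.Ioi 0))
    (hf_sq : IntegrableOn (fun t ↦ f t ^ 2 * Real.exp (-2 * ω * t)) (Set.Ioi 0))
    (hh : IntegrableOn (fun t ↦ h t * Real.exp (-ω * t)) (Set.Ioi 0))
    (hh' : IntegrableOn (fun t ↦ deriv h t * Real.exp (-ω * t)) (Set.Ioi 0))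
    (hlower : ∀ τ : ℝ, c ≤ α₁ * ‖laplace h (ω + τ * I)‖ ^ 2 +
      α₂ * ‖(ω + τ * I) * laplace h (ω + τ * I)‖ ^ 2) :
    c * ∫ t in Set.Ioi 0, f t ^ 2 * Real.exp (-2 * ω * t) ≤
      ∫ t in Set.Ioi 0, (α₁ * conv f h t ^ 2 + α₂ * deriv (conv f h) t ^ 2) *
        Real.exp (-2 * ω * t) := by
  rw [← dampedExtension.integrable_iff] at hf hh hh'
  rw [← dampedExtension.memLp_two_iff hf.1] at hf_sq
  have hconv := dampedExtension.integrable_conv hf hh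
  have hconv₂ := dampedExtension.memLp_two_conv hf_sq hh
  have hderiv := dampedExtension.integrable_deriv_conv hf_cont hh_diff hf hh'
  have hderiv₂ := dampedExtension.memLp_two_deriv_conv hf_cont hh_diff hf_sq hh'
  have hspectral := mul_integral_norm_laplace_sq_le hf_cont hh_diff hf hf_sq hh hh' hlower
  rw [integral_norm_laplace_sq hf hf_sq, integral_norm_laplace_sq hconv hconv₂,
    integral_norm_laplace_sq hderiv hderiv₂] at hspectral
  rw [dampedExtension.memLp_two_iff hconv.1] at hconv₂
  rw [dampedExtension.memLp_two_iff hderiv.1] at hderiv₂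
  simp only [add_mul, mul_assoc α₁, mul_assoc α₂]
  rw [integral_add (hconv₂.const_mul α₁) (hderiv₂.const_mul α₂), integral_const_mul,
    integral_const_mul]
  refine le_of_mul_le_mul_left ?_ two_pi_pos
  linarith

/-- **Coercivity of the combined loss `𝓔 = α₁𝓔₁ + α₂𝓔₂`.** If the combined
spectral weight `α₁|ĥ(ω+iτ)|² + α₂|(ω+iτ)ĥ(ω+iτ)|²` has a uniform positive
lower bound `c` in `τ`, then `𝓔(θ) ≥ c‖θ−γ‖²_{L²(ρ)}` — even though neither
single weight `m₁(τ) = |ĥ(ω+iτ)|²` nor `m₂(τ) = |(ω+iτ)ĥ(ω+iτ)|²` need have a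
positive infimum. -/
theorem combined_loss_coercive (γ θ h : ℝ → ℝ) (Cd σ α₁ α₂ ω c : ℝ)
    (hCd : 0 < Cd) (hσ : 0 < σ) (hα₁ : 0 < α₁) (hα₂ : 0 < α₂) (hα : α₁ + α₂ = 1)
    (hω : 0 < ω) (hc : 0 < c)
    (hsmoothγ : ContDiff ℝ (⊤ : ℕ∞) γ) (hsmoothθ : ContDiff ℝ (⊤ : ℕ∞) θ) (hsmoothh : ContDiff ℝ (⊤ : ℕ∞) h)
    (hdecayγ : ∀ t : ℝ, 0 ≤ t → |γ t| ≤ Cd * Real.exp (-σ * t))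
    (hdecayθ : ∀ t : ℝ, 0 ≤ t → |θ t| ≤ Cd * Real.exp (-σ * t))
    (hdecayh : ∀ t : ℝ, 0 ≤ t → |h t| ≤ Cd * Real.exp (-σ * t))
    (hdecayh' : ∀ t : ℝ, 0 ≤ t → |deriv h t| ≤ Cd * Real.exp (-σ * t))
    (hlower : ∀ τ : ℝ,
      c ≤ α₁ * ‖laplace h ((ω : ℂ) + τ * Complex.I)‖ ^ 2 +
            α₂ * ‖((ω : ℂ) + τ * Complex.I) * laplace h ((ω : ℂ) + τ * Complex.I)‖ ^ 2) :
    c * (∫ t in Set.Ioi (0 : ℝ), (θ t - γ t) ^ 2 * Real.exp (-2 * ω * t))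
      ≤ ∫ t in Set.Ioi (0 : ℝ),
          (α₁ * (conv (fun s => θ s - γ s) h t) ^ 2 +
            α₂ * (deriv (conv (fun s => θ s - γ s) h) t) ^ 2) *
            Real.exp (-2 * ω * t) := by
  have hf_cont : Continuous fun s ↦ θ s - γ s := hsmoothθ.continuous.sub hsmoothγ.continuous
  have hf_decay (t : ℝ) (ht : 0 ≤ t) : |θ t - γ t| ≤ (Cd + Cd) * Real.exp (-σ * t) := by
    rw [add_mul]
    exact (abs_sub _ _).trans (add_le_add (hdecayθ t ht) (hdecayγ t ht))
  have hh_diff : ContDiff ℝ 1 h := hsmoothh.of_le (by simp)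
  have hσω : 0 < σ + ω := add_pos hσ hω
  exact combined_loss_coercive_general hf_cont hh_diff
    (integrableOn_mul_exp_of_abs_le hσω hf_cont.aestronglyMeasurable hf_decay)
    (integrableOn_sq_mul_exp_of_abs_le hσω hf_cont.aestronglyMeasurable hf_decay)
    (integrableOn_mul_exp_of_abs_le hσω hh_diff.continuous.aestronglyMeasurable hdecayh)
    (integrableOn_mul_exp_of_abs_le hσω
      (hh_diff.continuous_deriv le_rfl).aestronglyMeasurable hdecayh') hlower
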